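/- For every integer n ≥ 40, B₁(n) < (log T̃(n+1))/(n+1) + (log T̃(n-1))/(n-1) - 2·(log T̃(n))/n < B₂(n), where B₁(n) = 72π/((n+1)·(24n+23)^{3/2}) - 4·log(μ(n-1))/(n-1)³ and B₂(n) = 72π/((n-1)·(24n-25)^{3/2}) - 4·log(μ(n+1))/(n+1)³ + 5/(n-1)³. -/

import Mathlib

open Real

/-- The partition function, as a real number. -/
noncomputable def p (n : ℕ) : ℝ := (Fintype.card (Nat.Partition n) : ℝ)

/-- `μ(x) = (π/6)·√(24x - 1)`. -/
noncomputable def mu (x : ℝ) : ℝ := π / 6 * Real.sqrt (24 * x - 1)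

/-- `d = π²/(6√3)`. -/
noncomputable def d : ℝ := π ^ 2 / (6 * Real.sqrt 3)

/-- The main term `T̃(x) = (d/μ(x)²)·(1 - 1/μ(x))·e^{μ(x)}`. -/
noncomputable def T (x : ℝ) : ℝ := d / mu x ^ 2 * (1 - 1 / mu x) * Real.exp (mu x)

/-- A second difference is a value of the second derivative. -/
theorem exists_second_difference_eq {f f' f'' : ℝ → ℝ} {x : ℝ}
    (hf : ∀ t ∈ Set.Icc (x - 1) (x + 1), HasDerivAt f (f' t) t)
    (hf' : ∀ t ∈ Set.Icc (x - 1) (x + 1), HasDerivAt f' (f'' t) t) :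
    ∃ c ∈ Set.Ioo (x - 1) (x + 1), f (x + 1) + f (x - 1) - 2 * f x = f'' c := by
  have hφ : ∀ t ∈ Set.Icc (x - 1) x,
      HasDerivAt (fun t => f (t + 1) - f t) (f' (t + 1) - f' t) t := by
    intro t ht
    exact ((hf (t + 1) ⟨by linarith [ht.1], by linarith [ht.2]⟩).comp_add_const t 1).sub
      (hf t ⟨ht.1, by linarith [ht.2]⟩)
  obtain ⟨b, hb, hbe⟩ := exists_hasDerivAt_eq_slope (fun t => f (t + 1) - f t)
    (fun t => f' (t + 1) - f' t) (show x - 1 < x by linarith)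
    (fun t ht => (hφ t ht).continuousAt.continuousWithinAt)
    (fun t ht => hφ t (Set.Ioo_subset_Icc_self ht))
  have hsub : ∀ t ∈ Set.Icc b (b + 1), t ∈ Set.Icc (x - 1) (x + 1) := fun t ht =>
    ⟨by linarith [ht.1, hb.1], by linarith [ht.2, hb.2]⟩
  obtain ⟨c, hc, hce⟩ := exists_hasDerivAt_eq_slope f' f'' (show b < b + 1 by linarith)
    (fun t ht => (hf' t (hsub t ht)).continuousAt.continuousWithinAt)
    (fun t ht => hf' t (hsub t (Set.Ioo_subset_Icc_self ht)))
  refine ⟨c, ⟨by linarith [hc.1, hb.1], by linarith [hc.2, hb.2]⟩, ?_⟩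
  rw [hce, add_sub_cancel_left, div_one, hbe]
  simp only [sub_add_cancel, sub_sub_cancel, div_one]
  ring

theorem hasDerivAt_mu {x : ℝ} (hx : 0 < 24 * x - 1) :
    HasDerivAt mu (π ^ 2 / 3 / mu x) x := by
  have h : HasDerivAt (fun x : ℝ => 24 * x - 1) 24 x := by
    simpa using ((hasDerivAt_id x).const_mul 24).sub_const 1
  have hs : 0 < √(24 * x - 1) := Real.sqrt_pos.2 hx
  refine ((h.sqrt hx.ne').const_mul (π / 6)).congr_deriv ?_
  unfold mu
  field_simp
  norm_num

theorem mu_sq {x : ℝ} (hx : 0 ≤ 24 * x - 1) : mu x ^ 2 = π ^ 2 / 36 * (24 * x - 1) := by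
  rw [mu, mul_pow, Real.sq_sqrt hx]
  ring

theorem ten_lt_mu {x : ℝ} (hx : 39 ≤ x) : 10 < mu x := by
  have hs : (20 : ℝ) ≤ √(24 * x - 1) := Real.le_sqrt_of_sq_le (by linarith)
  unfold mu
  nlinarith [Real.pi_gt_three]

theorem rpow_three_halves {y : ℝ} (hy : 0 ≤ y) : y ^ ((3 : ℝ) / 2) = √y ^ 3 := by
  rw [Real.sqrt_eq_rpow, ← Real.rpow_natCast, ← Real.rpow_mul hy]
  norm_num

theorem d_pos : 0 < d := by
  unfold d
  positivity

theorem d_bounds : 10 / 11 ≤ d ∧ d ≤ 1 := by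
  have h3 : √3 ≤ 1.733 := Real.sqrt_le_iff.2 (by norm_num)
  have h3' : 1.732 ≤ √3 := Real.le_sqrt_of_sq_le (by norm_num)
  have hp := Real.pi_gt_d2
  have hp' := Real.pi_lt_d2
  unfold d
  constructor
  · rw [le_div_iff₀ (by positivity)]
    nlinarith
  · rw [div_le_one (by positivity)]
    nlinarith

theorem log_d_bounds : -(1 / 10) ≤ log d ∧ log d ≤ 0 := by
  obtain ⟨h₁, h₂⟩ := d_bounds
  refine ⟨?_, Real.log_nonpos d_pos.le h₂⟩
  have h := Real.one_sub_inv_le_log_of_pos d_pos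
  have : d⁻¹ ≤ (10 / 11)⁻¹ := inv_anti₀ (by norm_num) h₁
  norm_num at this
  linarith

/-- The logarithm of `T`, expanded. -/
noncomputable def logT (x : ℝ) : ℝ := log d - 3 * log (mu x) + log (mu x - 1) + mu x

/-- The derivative of `logT`. -/
noncomputable def logTDeriv (x : ℝ) : ℝ :=
  π ^ 2 / 3 / mu x * (1 - 3 / mu x + 1 / (mu x - 1))

/-- The second derivative of `logT`. -/
noncomputable def logTDeriv₂ (x : ℝ) : ℝ :=
  -(π ^ 2 / 3) ^ 2 / mu x ^ 3 * (1 - 3 / mu x + 1 / (mu x - 1)) +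
    (π ^ 2 / 3 / mu x) ^ 2 * (3 / mu x ^ 2 - 1 / (mu x - 1) ^ 2)

theorem log_T_eq {x : ℝ} (hm : 1 < mu x) : log (T x) = logT x := by
  have hm0 : mu x ≠ 0 := by linarith
  have hm1 : mu x - 1 ≠ 0 := by linarith
  have h : 1 - 1 / mu x = (mu x - 1) / mu x := by field_simp
  have hd := d_pos.ne'
  rw [T, h, Real.log_mul (by positivity) (Real.exp_ne_zero _), Real.log_mul (by positivity)
    (by positivity), Real.log_div hd (by positivity), Real.log_div hm1 hm0, Real.log_pow,
    Real.log_exp, logT]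
  push_cast
  ring

theorem hasDerivAt_logT {x : ℝ} (hx : 0 < 24 * x - 1) (hm : 1 < mu x) :
    HasDerivAt logT (logTDeriv x) x := by
  have h := hasDerivAt_mu hx
  have hm0 : mu x ≠ 0 := by linarith
  have hm1 : mu x - 1 ≠ 0 := by linarith
  refine (((((h.log hm0).const_mul 3).const_sub (log d)).add
    ((h.sub_const 1).log hm1)).add h).congr_deriv ?_
  unfold logTDeriv
  field_simp
  ring

theorem hasDerivAt_logTDeriv {x : ℝ} (hx : 0 < 24 * x - 1) (hm : 1 < mu x) :
    HasDerivAt logTDeriv (logTDeriv₂ x) x := by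
  have h := hasDerivAt_mu hx
  have hm0 : mu x ≠ 0 := by linarith
  have hm1 : mu x - 1 ≠ 0 := by linarith
  have hc := fun c : ℝ => hasDerivAt_const x c
  refine (((hc (π ^ 2 / 3)).div h hm0).mul (((hc 1).sub ((hc 3).div h hm0)).add
    ((hc 1).div (h.sub_const 1) hm1))).congr_deriv ?_
  simp only [logTDeriv₂, Pi.add_apply, Pi.sub_apply, Pi.div_apply]
  field_simp
  ring

theorem hasDerivAt_div_id {f : ℝ → ℝ} {f' x : ℝ} (hf : HasDerivAt f f' x) (hx : x ≠ 0) :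
    HasDerivAt (fun t => f t / t) (f' / x - f x / x ^ 2) x := by
  refine (hf.div (hasDerivAt_id x) hx).congr_deriv ?_
  simp only [id]
  field_simp

theorem hasDerivAt_div_sub_div_sq {f g : ℝ → ℝ} {g' x : ℝ} (hf : HasDerivAt f (g x) x)
    (hg : HasDerivAt g g' x) (hx : x ≠ 0) :
    HasDerivAt (fun t => g t / t - f t / t ^ 2)
      ((x ^ 2 * g' - 2 * x * g x + 2 * f x) / x ^ 3) x := by
  refine ((hasDerivAt_div_id hg hx).sub
    (hf.div (hasDerivAt_pow 2 x) (pow_ne_zero 2 hx))).congr_deriv ?_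
  push_cast
  field_simp
  ring

/-- The rational expression controlling the second derivative of `logT x / x`, in terms of
`a = π² / 3`, `t = 1 / μ`, `u = 1 / (1 - t)` and the logarithmic terms `l = log d`,
`k = log (1 - t)`. -/
theorem remainder_bounds {a t u l k : ℝ} (ha : 3 ≤ a) (ha' : a ≤ 10 / 3) (ht : 0 < t)
    (ht' : t ≤ 1 / 10) (hu : 1 ≤ u) (hu' : u ≤ 10 / 9) (hl : -(1 / 10) ≤ l) (hl' : l ≤ 0)
    (hk : -(1 / 9) ≤ k) (hk' : k ≤ 0) :
    0 < -(a * t) / 4 - a ^ 2 * t ^ 3 / 144 +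
      (1 / 2 + a * t ^ 2 / 24) ^ 2 * (6 - u - u ^ 2) +
      2 * (1 / 2 + a * t ^ 2 / 24) * (3 - u) + 2 * l + 2 * k ∧
    -(a * t) / 4 - a ^ 2 * t ^ 3 / 144 +
      (1 / 2 + a * t ^ 2 / 24) ^ 2 * (6 - u - u ^ 2) +
      2 * (1 / 2 + a * t ^ 2 / 24) * (3 - u) + 2 * l + 2 * k < 5 := by
  have hat : a * t ≤ 10 / 3 * (1 / 10) := by gcongr
  have hat0 : 0 < a * t := by positivity
  have hat2 : a ^ 2 * t ^ 3 ≤ (10 / 3) ^ 2 * (1 / 10) ^ 3 := by gcongr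
  have hat20 : 0 < a ^ 2 * t ^ 3 := by positivity
  have hs : a * t ^ 2 ≤ 10 / 3 * (1 / 10) ^ 2 := by gcongr
  have hs0 : 0 < a * t ^ 2 := by positivity
  set s := 1 / 2 + a * t ^ 2 / 24 with hsdef
  have h₁ : 1 / 2 ≤ s := by linarith
  have h₂ : s ≤ 51 / 100 := by linarith
  have hv : 7 / 2 ≤ 6 - u - u ^ 2 := by nlinarith
  have hv' : 6 - u - u ^ 2 ≤ 4 := by nlinarith
  have hss : 1 / 4 ≤ s ^ 2 := by nlinarith
  have hss' : s ^ 2 ≤ 27 / 100 := by nlinarith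
  constructor <;> nlinarith

theorem remainder_eq {a x m l k : ℝ} (ha : a ≠ 0) (hm : 1 < m)
    (hx : x = m ^ 2 / (2 * a) + 1 / 24) :
    x ^ 2 * (-a ^ 2 / m ^ 3 * (1 - 3 / m + 1 / (m - 1)) +
      (a / m) ^ 2 * (3 / m ^ 2 - 1 / (m - 1) ^ 2)) -
      2 * x * (a / m * (1 - 3 / m + 1 / (m - 1))) + 2 * (l + k + m) - 3 * a ^ 2 / m ^ 3 * x ^ 2 =
    -(a * (1 / m)) / 4 - a ^ 2 * (1 / m) ^ 3 / 144 +
      (1 / 2 + a * (1 / m) ^ 2 / 24) ^ 2 * (6 - m / (m - 1) - (m / (m - 1)) ^ 2) +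
      2 * (1 / 2 + a * (1 / m) ^ 2 / 24) * (3 - m / (m - 1)) + 2 * l + 2 * k := by
  have hm0 : m ≠ 0 := by linarith
  have hm1 : m - 1 ≠ 0 := by linarith
  subst hx
  field_simp
  ring

theorem second_deriv_bounds {x : ℝ} (hx : 39 ≤ x) :
    72 * π / (x * √(24 * x - 1) ^ 3) - 4 * log (mu x) / x ^ 3 <
      (x ^ 2 * logTDeriv₂ x - 2 * x * logTDeriv x + 2 * logT x) / x ^ 3 ∧
    (x ^ 2 * logTDeriv₂ x - 2 * x * logTDeriv x + 2 * logT x) / x ^ 3 <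
      72 * π / (x * √(24 * x - 1) ^ 3) - 4 * log (mu x) / x ^ 3 + 5 / x ^ 3 := by
  have hm := ten_lt_mu hx
  have hx0 : 0 < x := by linarith
  have hpi := Real.pi_pos
  have hs : 0 < √(24 * x - 1) := Real.sqrt_pos.2 (by linarith)
  have hmain : 72 * π / (x * √(24 * x - 1) ^ 3) =
      3 * (π ^ 2 / 3) ^ 2 / mu x ^ 3 * x ^ 2 / x ^ 3 := by
    unfold mu
    field_simp
    norm_num
  have hxm : x = mu x ^ 2 / (2 * (π ^ 2 / 3)) + 1 / 24 := by
    rw [mu_sq (by linarith)]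
    field_simp
    ring
  have hm0 : 0 < mu x := by linarith
  have hm1 : 0 < mu x - 1 := by linarith
  have hk : log (mu x - 1) - log (mu x) = log (1 - 1 / mu x) := by
    rw [← Real.log_div hm1.ne' hm0.ne']
    congr 1
    field_simp
  have ht' : 1 / mu x ≤ 1 / 10 := by gcongr
  have ht : 0 < 1 / mu x := by positivity
  have hu : 1 ≤ mu x / (mu x - 1) := by
    rw [le_div_iff₀ hm1]
    linarith
  have hu' : mu x / (mu x - 1) ≤ 10 / 9 := by
    rw [div_le_iff₀ hm1]
    linarith
  have hk₁ : -(1 / 9) ≤ log (mu x - 1) - log (mu x) := by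
    have h := Real.one_sub_inv_le_log_of_pos (show 0 < 1 - 1 / mu x by linarith)
    have h' : (1 - 1 / mu x)⁻¹ = mu x / (mu x - 1) := by field_simp
    rw [hk]
    linarith
  have hk₂ : log (mu x - 1) - log (mu x) ≤ 0 := by
    rw [hk]
    exact Real.log_nonpos (by linarith) (by linarith)
  have hb := remainder_bounds (a := π ^ 2 / 3) (by nlinarith [Real.pi_gt_d2])
    (by nlinarith [Real.pi_lt_d2]) ht ht' hu hu' log_d_bounds.1 log_d_bounds.2 hk₁ hk₂
  rw [← remainder_eq (x := x) (by positivity) (by linarith) hxm] at hb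
  have hx3 : 0 < x ^ 3 := by positivity
  rw [hmain, ← sub_div, ← add_div, div_lt_div_iff_of_pos_right hx3,
    div_lt_div_iff_of_pos_right hx3]
  simp only [logTDeriv₂, logTDeriv, logT]
  constructor <;> linarith [hb.1, hb.2]

theorem main_term_antitone {x y : ℝ} (hx : 39 ≤ x) (hxy : x ≤ y) :
    72 * π / (y * √(24 * y - 1) ^ 3) ≤ 72 * π / (x * √(24 * x - 1) ^ 3) := by
  have hs : 0 < √(24 * x - 1) := Real.sqrt_pos.2 (by linarith)
  have hx0 : 0 < x := by linarith
  have hy0 : 0 < y := by linarith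
  gcongr

theorem log_mu_div_antitone {x y : ℝ} (hx : 39 ≤ x) (hxy : x ≤ y) :
    4 * log (mu y) / y ^ 3 ≤ 4 * log (mu x) / x ^ 3 := by
  have hx0 : 0 < x := by linarith
  have hy0 : 0 < y := by linarith
  have hmx := ten_lt_mu hx
  have hmy := ten_lt_mu (hx.trans hxy)
  have hpi := Real.pi_pos
  have hlx : 1 ≤ log (mu x) := by
    rw [Real.le_log_iff_exp_le (by linarith)]
    linarith [Real.exp_one_lt_d9]
  have hratio : mu y / mu x ≤ y ^ 3 / x ^ 3 := by
    have h1 : 1 ≤ y / x := (one_le_div hx0).2 hxy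
    have hsq : (mu y / mu x) ^ 2 ≤ (y ^ 3 / x ^ 3) ^ 2 := by
      rw [div_pow, mu_sq (by linarith), mu_sq (by linarith),
        mul_div_mul_left _ _ (by positivity)]
      have h2 : (24 * y - 1) / (24 * x - 1) ≤ (y / x) ^ 2 := by
        rw [div_pow, div_le_div_iff₀ (by linarith) (by positivity)]
        have h3 : 0 ≤ 24 * x * y - x - y := by nlinarith
        nlinarith [mul_nonneg (sub_nonneg.2 hxy) h3]
      calc _ ≤ (y / x) ^ 2 := h2
        _ ≤ (y / x) ^ 6 := pow_le_pow_right₀ h1 (by norm_num)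
        _ = _ := by rw [← div_pow]; ring
    exact le_of_sq_le_sq hsq (by positivity)
  have hly : log (mu y) ≤ log (mu x) + (y ^ 3 / x ^ 3 - 1) := by
    have h := Real.log_le_sub_one_of_pos (show 0 < mu y / mu x by apply div_pos <;> linarith)
    rw [Real.log_div (by linarith) (by linarith)] at h
    linarith
  have hr : 1 ≤ y ^ 3 / x ^ 3 := (one_le_div (by positivity)).2 (by gcongr)
  have hly' : log (mu y) ≤ log (mu x) * (y ^ 3 / x ^ 3) := by nlinarith
  rw [div_le_iff₀ (by positivity)]
  calc 4 * log (mu y) ≤ 4 * (log (mu x) * (y ^ 3 / x ^ 3)) := by linarith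
    _ = _ := by ring

theorem second_difference_log_T_bounds (n : ℕ) (hn : 40 ≤ n) :
    72 * π / (((n : ℝ) + 1) * (24 * (n : ℝ) + 23) ^ ((3 : ℝ) / 2)) -
        4 * Real.log (mu ((n : ℝ) - 1)) / ((n : ℝ) - 1) ^ 3 <
      Real.log (T ((n : ℝ) + 1)) / ((n : ℝ) + 1) +
        Real.log (T ((n : ℝ) - 1)) / ((n : ℝ) - 1) -
        2 * Real.log (T (n : ℝ)) / (n : ℝ) ∧
    Real.log (T ((n : ℝ) + 1)) / ((n : ℝ) + 1) +
        Real.log (T ((n : ℝ) - 1)) / ((n : ℝ) - 1) -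
        2 * Real.log (T (n : ℝ)) / (n : ℝ) <
      72 * π / (((n : ℝ) - 1) * (24 * (n : ℝ) - 25) ^ ((3 : ℝ) / 2)) -
        4 * Real.log (mu ((n : ℝ) + 1)) / ((n : ℝ) + 1) ^ 3 + 5 / ((n : ℝ) - 1) ^ 3 := by
  have hn' : (40 : ℝ) ≤ n := by exact_mod_cast hn
  set x : ℝ := (n : ℝ)
  have hpos : ∀ t ∈ Set.Icc (x - 1) (x + 1), 39 ≤ t := fun t ht => by linarith [ht.1]
  obtain ⟨c, hc, hce⟩ := exists_second_difference_eq (x := x)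
    (f := fun t => logT t / t) (f' := fun t => logTDeriv t / t - logT t / t ^ 2)
    (f'' := fun t => (t ^ 2 * logTDeriv₂ t - 2 * t * logTDeriv t + 2 * logT t) / t ^ 3)
    (fun t ht => hasDerivAt_div_id
      (hasDerivAt_logT (by linarith [hpos t ht]) (by linarith [ten_lt_mu (hpos t ht)]))
      (by linarith [hpos t ht]))
    (fun t ht => hasDerivAt_div_sub_div_sq
      (hasDerivAt_logT (by linarith [hpos t ht]) (by linarith [ten_lt_mu (hpos t ht)]))
      (hasDerivAt_logTDeriv (by linarith [hpos t ht]) (by linarith [ten_lt_mu (hpos t ht)]))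
      (by linarith [hpos t ht]))
  have hc39 : 39 ≤ c := by linarith [hc.1]
  have hT : ∀ t : ℝ, 39 ≤ t → log (T t) = logT t := fun t ht =>
    log_T_eq (by linarith [ten_lt_mu ht])
  rw [hT _ (by linarith), hT _ (by linarith), hT _ (by linarith), mul_div_assoc 2, hce,
    rpow_three_halves (by linarith), rpow_three_halves (by linarith)]
  obtain ⟨hlo, hhi⟩ := second_deriv_bounds hc39
  have h₁ := main_term_antitone hc39 hc.2.le
  have h₂ := main_term_antitone (by linarith) hc.1.le
  have h₃ := log_mu_div_antitone hc39 hc.2.le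
  have h₄ := log_mu_div_antitone (by linarith) hc.1.le
  have h₅ : 5 / c ^ 3 ≤ 5 / (x - 1) ^ 3 := by
    have : 0 < x - 1 := by linarith
    have := hc.1.le
    gcongr
  rw [show 24 * (x + 1) - 1 = 24 * x + 23 by ring] at h₁
  rw [show 24 * (x - 1) - 1 = 24 * x - 25 by ring] at h₂
  constructor <;> linarith
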